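/- arXiv:2101.03728 — 2 statements merged into one kernel-verified Lean document; each statement's English description precedes it below -/
import Mathlib

section
/- For all f∈H¹(𝕋), g∈L²(𝕋) and h∈L²(𝕋): ∑_{k≠0} ∑_{k₁+k₂=k, |k₁|>10|k|} |k|^{−1}|k₁| |f̂_{k₁}| |ĝ_{k₂}| |ĥ_k| ≤ C‖f‖_{H¹}‖g‖_{L²}‖h‖_{L²}, where C is an absolute constant. -/
/-!
Two applications of Cauchy–Schwarz. For fixed `k`, Cauchy–Schwarz in `k₁` bounds
`∑ |k₁| |f̂_{k₁}| |ĝ_{k-k₁}|` by `‖f‖_{H¹} ‖g‖_{L²}`, since `k₁ ↦ k - k₁` permutes `ℤ`; the frequency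
restriction `|k₁| > 10|k|` is simply dropped. A second one in `k` bounds `∑ |k|⁻¹ |ĥ_k|` by
`(∑ |k|⁻²)^{1/2} ‖h‖_{L²}`. The factor `2π ≥ 1` in the norms only helps.
-/

noncomputable section

open Complex MeasureTheory
open scoped BigOperators

/-- A function on the torus `𝕋 = (-π,π)` is represented by its sequence of Fourier
coefficients `f̂ : ℤ → ℂ`. -/
abbrev FSeq := ℤ → ℂ

/-- Membership in the Sobolev space `H^s(𝕋)`:
`∑_{k∈ℤ} (1+k²)^s |f̂_k|² < ∞`. -/
def InHs (s : ℝ) (a : FSeq) : Prop :=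
  Summable fun k : ℤ => (1 + (k : ℝ) ^ 2) ^ s * ‖a k‖ ^ 2

/-- The `H^s(𝕋)` norm: `‖f‖_{H^s}² = 2π ∑_{k∈ℤ} (1+k²)^s |f̂_k|²`. -/
def hnorm (s : ℝ) (a : FSeq) : ℝ :=
  Real.sqrt (2 * Real.pi * ∑' k : ℤ, (1 + (k : ℝ) ^ 2) ^ s * ‖a k‖ ^ 2)

/-- Cauchy–Schwarz for nonnegative square-summable sequences, with summability of the product. -/
lemma tsum_mul_cauchy_schwarz {a b : ℤ → ℝ} (ha : ∀ k, 0 ≤ a k) (hb : ∀ k, 0 ≤ b k)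
    (hsa : Summable fun k => a k ^ 2) (hsb : Summable fun k => b k ^ 2) :
    (Summable fun k => a k * b k) ∧
      ∑' k, a k * b k ≤ √(∑' k, a k ^ 2) * √(∑' k, b k ^ 2) := by
  have h := Real.inner_le_Lp_mul_Lq_tsum_of_nonneg (p := 2) (q := 2)
    Real.HolderConjugate.two_two ha hb (by simpa using hsa) (by simpa using hsb)
  refine ⟨(hsa.add hsb).of_nonneg_of_le (fun k => mul_nonneg (ha k) (hb k)) fun k => ?_,
    by simpa [Real.sqrt_eq_rpow] using h⟩
  nlinarith [sq_nonneg (a k - b k), sq_nonneg (a k), sq_nonneg (b k)]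

lemma sqrt_tsum_le_hnorm (s : ℝ) (a : FSeq) :
    √(∑' k : ℤ, (1 + (k : ℝ) ^ 2) ^ s * ‖a k‖ ^ 2) ≤ hnorm s a := by
  apply Real.sqrt_le_sqrt
  have h0 : 0 ≤ ∑' k : ℤ, (1 + (k : ℝ) ^ 2) ^ s * ‖a k‖ ^ 2 :=
    tsum_nonneg fun k => by positivity
  nlinarith [Real.pi_gt_three]

lemma InHs.summable_sq {a : FSeq} (ha : InHs 0 a) : Summable fun k => ‖a k‖ ^ 2 := by
  simpa [InHs] using ha

lemma sqrt_tsum_sq_le_hnorm (a : FSeq) : √(∑' k : ℤ, ‖a k‖ ^ 2) ≤ hnorm 0 a := by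
  simpa using sqrt_tsum_le_hnorm 0 a

/-- Cauchy–Schwarz in `k₁`: the convolution of `|k₁| |f̂|` with `|ĝ|` is bounded uniformly in `k`. -/
lemma conv_bound {f g : FSeq} (hf : InHs 1 f) (hg : InHs 0 g) (k : ℤ) :
    (Summable fun k₁ : ℤ => (|(k₁ : ℝ)| * ‖f k₁‖) * ‖g (k - k₁)‖) ∧
      ∑' k₁ : ℤ, (|(k₁ : ℝ)| * ‖f k₁‖) * ‖g (k - k₁)‖ ≤ hnorm 1 f * hnorm 0 g := by
  have hf' : Summable fun k : ℤ => (1 + (k : ℝ) ^ 2) ^ (1 : ℝ) * ‖f k‖ ^ 2 := hf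
  have hle : ∀ k : ℤ, (|(k : ℝ)| * ‖f k‖) ^ 2 ≤ (1 + (k : ℝ) ^ 2) ^ (1 : ℝ) * ‖f k‖ ^ 2 := by
    intro k
    rw [mul_pow, sq_abs, Real.rpow_one]
    gcongr
    linarith
  have hsf : Summable fun k : ℤ => (|(k : ℝ)| * ‖f k‖) ^ 2 :=
    hf'.of_nonneg_of_le (fun k => by positivity) hle
  have hsg : Summable fun k₁ : ℤ => ‖g (k - k₁)‖ ^ 2 :=
    (Equiv.subLeft k).summable_iff.2 hg.summable_sq
  have heq : ∑' k₁ : ℤ, ‖g (k - k₁)‖ ^ 2 = ∑' k₁ : ℤ, ‖g k₁‖ ^ 2 :=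
    (Equiv.subLeft k).tsum_eq fun k₁ => ‖g k₁‖ ^ 2
  obtain ⟨h1, h2⟩ := tsum_mul_cauchy_schwarz (a := fun k₁ : ℤ => |(k₁ : ℝ)| * ‖f k₁‖)
    (b := fun k₁ => ‖g (k - k₁)‖) (fun k => by positivity) (fun k => by positivity) hsf hsg
  refine ⟨h1, h2.trans ?_⟩
  rw [heq]
  gcongr
  · exact Real.sqrt_nonneg _
  · exact (Real.sqrt_le_sqrt (hsf.tsum_le_tsum hle hf')).trans (sqrt_tsum_le_hnorm 1 f)
  · exact sqrt_tsum_sq_le_hnorm g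

theorem high_freq_sum_H1_L2 :
    ∃ C : ℝ, 0 < C ∧ ∀ f g h : FSeq, InHs 1 f → InHs 0 g → InHs 0 h →
      ∑' k : ℤ, ∑' k₁ : ℤ,
        (if k ≠ 0 ∧ 10 * |k| < |k₁| then
          (|(k : ℝ)|)⁻¹ * |(k₁ : ℝ)| * ‖f k₁‖ * ‖g (k - k₁)‖ * ‖h k‖ else 0)
      ≤ C * hnorm 1 f * hnorm 0 g * hnorm 0 h := by
  -- At `k = 0` the summand below is `0⁻¹ = 0`; adding `1` gives positivity for free.
  refine ⟨√(∑' k : ℤ, (|(k : ℝ)|⁻¹) ^ 2) + 1, by positivity, fun f g h hf hg hh => ?_⟩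
  have hN : ∀ s a, 0 ≤ hnorm s a := fun s a => Real.sqrt_nonneg _
  have hsk : Summable fun k : ℤ => (|(k : ℝ)|⁻¹) ^ 2 := by
    simpa using Real.summable_one_div_int_pow.2 one_lt_two
  obtain ⟨h1, h2⟩ := tsum_mul_cauchy_schwarz (a := fun k : ℤ => |(k : ℝ)|⁻¹)
    (b := fun k => ‖h k‖) (fun k => by positivity) (fun k => by positivity) hsk hh.summable_sq
  have hinner : ∀ k : ℤ, ∑' k₁ : ℤ,
      (if k ≠ 0 ∧ 10 * |k| < |k₁| then
        (|(k : ℝ)|)⁻¹ * |(k₁ : ℝ)| * ‖f k₁‖ * ‖g (k - k₁)‖ * ‖h k‖ else 0)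
      ≤ (|(k : ℝ)|⁻¹ * ‖h k‖) * (hnorm 1 f * hnorm 0 g) := by
    intro k
    obtain ⟨c1, c2⟩ := conv_bound hf hg k
    have hle : ∀ k₁ : ℤ, (if k ≠ 0 ∧ 10 * |k| < |k₁| then
        (|(k : ℝ)|)⁻¹ * |(k₁ : ℝ)| * ‖f k₁‖ * ‖g (k - k₁)‖ * ‖h k‖ else 0)
        ≤ (|(k : ℝ)|⁻¹ * ‖h k‖) * ((|(k₁ : ℝ)| * ‖f k₁‖) * ‖g (k - k₁)‖) := by
      intro k₁
      split_ifs
      · exact le_of_eq (by ring)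
      · positivity
    have hs := c1.mul_left (|(k : ℝ)|⁻¹ * ‖h k‖)
    calc _ ≤ ∑' k₁ : ℤ, (|(k : ℝ)|⁻¹ * ‖h k‖) * ((|(k₁ : ℝ)| * ‖f k₁‖) * ‖g (k - k₁)‖) :=
          (hs.of_nonneg_of_le (fun k₁ => by split_ifs <;> positivity) hle).tsum_le_tsum hle hs
      _ ≤ _ := by
          rw [tsum_mul_left]
          gcongr
  have hs := h1.mul_right (hnorm 1 f * hnorm 0 g)
  have hso := hs.of_nonneg_of_le
    (fun k => tsum_nonneg fun k₁ => by split_ifs <;> positivity) hinner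
  calc _ ≤ ∑' k : ℤ, (|(k : ℝ)|⁻¹ * ‖h k‖) * (hnorm 1 f * hnorm 0 g) :=
        hso.tsum_le_tsum hinner hs
    _ = (∑' k : ℤ, |(k : ℝ)|⁻¹ * ‖h k‖) * (hnorm 1 f * hnorm 0 g) := tsum_mul_right
    _ ≤ ((√(∑' k : ℤ, (|(k : ℝ)|⁻¹) ^ 2) + 1) * hnorm 0 h) * (hnorm 1 f * hnorm 0 g) := by
        have := hN 1 f
        have := hN 0 g
        gcongr
        refine h2.trans ?_
        gcongr
        · linarith
        · exact sqrt_tsum_sq_le_hnorm h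
    _ = _ := by ring

end
end

section
/- Let m≥1 be an integer, N a positive integer, s∈[0,1], and let v∈H¹(𝕋). Suppose g∈L²(𝕋) satisfies |ĝ_k| ≤ 1_{|k|>N} ∑_{k₁+⋯+k_m=k} |v̂_{k₁}|⋯|v̂_{k_m}| for every k∈ℤ (in particular ĝ_k=0 for |k|≤N). Then ‖g‖_{H^s} ≤ C N^{−1+s} ‖v‖_{H¹}^m, where the constant C depends only on m. -/
/-!
For `|k| > N` and `s ≤ 1` one has `(1+k²)^s ≤ N^{2(s-1)} (1+k²)` (`weight_le`), so it suffices to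
bound the `H¹` norm of the `m`-fold convolution power of `|v̂|`. That bound is the algebra property
of `H¹(𝕋)`, iterated (`wnorm_conv_le`, `wnorm_convPow_le`). For a single convolution, Cauchy–Schwarz
with weight `(1+j²)(1+(k-j)²)` reduces the claim to
`(1+k²) ∑_j (1+j²)⁻¹ (1+(k-j)²)⁻¹ ≤ 4 ∑_j (1+j²)⁻¹ < ∞`, which follows from
`1+k² ≤ 2 ((1+j²) + (1+(k-j)²))`.

All sums are taken in `[0,∞]`, so that no summability has to be tracked; the estimate is transferred
to the real series at the end.
-/


noncomputable section

open Complex MeasureTheory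
open scoped BigOperators

/-- The `m`-fold sum `∑_{k₁+⋯+k_m=k} |v̂_{k₁}|⋯|v̂_{k_m}|`. -/
def mSum (m : ℕ) (v : FSeq) (k : ℤ) : ℝ :=
  ∑' t : {t : Fin m → ℤ // ∑ i, t i = k}, ∏ i, ‖v (t.1 i)‖

open scoped ENNReal

/-- The weight `1 + k²` of the `H¹` norm, as an extended nonnegative real. -/
def wt (k : ℤ) : ℝ≥0∞ := ENNReal.ofReal (1 + (k : ℝ) ^ 2)

/-- The squared weighted norm `∑ (1+k²) b_k²`, always defined as an extended nonnegative real. -/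
def wnorm (b : ℤ → ℝ≥0∞) : ℝ≥0∞ := ∑' k, wt k * b k ^ 2

/-- The `m`-fold convolution power of `b`, with values in `[0,∞]`. -/
def convPow (m : ℕ) (b : ℤ → ℝ≥0∞) (k : ℤ) : ℝ≥0∞ :=
  ∑' t : {t : Fin m → ℤ // ∑ i, t i = k}, ∏ i, b (t.1 i)

lemma wt_ne_zero (k : ℤ) : wt k ≠ 0 := by
  have : 0 < 1 + (k : ℝ) ^ 2 := by positivity
  simp [wt, this]

lemma wt_ne_top (k : ℤ) : wt k ≠ ∞ := ENNReal.ofReal_ne_top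

lemma wt_le (k j : ℤ) : wt k ≤ 2 * (wt j + wt (k - j)) := by
  unfold wt
  rw [← ENNReal.ofReal_add (by positivity) (by positivity),
    show (2 : ℝ≥0∞) = ENNReal.ofReal 2 by simp, ← ENNReal.ofReal_mul (by norm_num)]
  apply ENNReal.ofReal_le_ofReal
  push_cast
  nlinarith [sq_nonneg ((k : ℝ) - 2 * j)]

lemma tsum_inv_wt_ne_top : ∑' k, (wt k)⁻¹ ≠ ∞ := by
  have h : Summable fun k : ℤ => (1 + (k : ℝ) ^ 2)⁻¹ := by
    have h1 : Summable fun k : ℤ => 1 / (k : ℝ) ^ 2 :=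
      Real.summable_one_div_int_pow.2 (by norm_num)
    refine Summable.of_norm_bounded_eventually h1 ?_
    filter_upwards [(Set.finite_singleton (0 : ℤ)).compl_mem_cofinite] with k hk
    have hk' : (k : ℝ) ≠ 0 := by simpa using hk
    rw [Real.norm_of_nonneg (by positivity), one_div]
    gcongr
    linarith
  have h2 : ∀ k, (wt k)⁻¹ = ENNReal.ofReal ((1 + (k : ℝ) ^ 2)⁻¹) := fun k =>
    (ENNReal.ofReal_inv_of_pos (by positivity)).symm
  simp_rw [h2]
  exact h.tsum_ofReal_ne_top

/-- Weighted Cauchy–Schwarz inequality. -/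
lemma tsum_sq_le {ι : Type*} (f u : ι → ℝ≥0∞) (h0 : ∀ i, u i ≠ 0) (ht : ∀ i, u i ≠ ∞) :
    (∑' i, f i) ^ 2 ≤ (∑' i, u i * f i ^ 2) * ∑' i, (u i)⁻¹ := by
  have amgm : ∀ x y : ℝ≥0∞, 2 * (x * y) ≤ x ^ 2 + y ^ 2 := by
    intro x y
    rcases eq_or_ne x ∞ with rfl | hx
    · simp
    rcases eq_or_ne y ∞ with rfl | hy
    · simp
    lift x to NNReal using hx
    lift y to NNReal using hy
    norm_cast
    rw [← mul_assoc]
    exact two_mul_le_add_sq x y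
  -- The square is expanded into a double sum and the cross terms are balanced by `u i / u j`.
  have key : ∀ i j, 2 * (f i * f j) ≤
      u i * f i ^ 2 * (u j)⁻¹ + u j * f j ^ 2 * (u i)⁻¹ := by
    intro i j
    have hij : ∀ i, ∃ r : ℝ≥0∞, r ≠ 0 ∧ r ≠ ∞ ∧ u i = r ^ 2 := fun i =>
      ⟨u i ^ (1 / 2 : ℝ), by simp [h0 i, ht i], by simp [h0 i, ht i], by
        rw [← ENNReal.rpow_natCast, ← ENNReal.rpow_mul]; norm_num⟩
    obtain ⟨r, hr0, hrt, hr⟩ := hij i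
    obtain ⟨q, hq0, hqt, hq⟩ := hij j
    have := amgm (r * f i * q⁻¹) (q * f j * r⁻¹)
    have e : (r * f i * q⁻¹) * (q * f j * r⁻¹) = f i * f j := by
      calc _ = (r * r⁻¹) * (q * q⁻¹) * (f i * f j) := by ring
        _ = _ := by rw [ENNReal.mul_inv_cancel hr0 hrt, ENNReal.mul_inv_cancel hq0 hqt]; ring
    rw [e] at this
    refine this.trans (le_of_eq ?_)
    rw [hr, hq, ENNReal.inv_pow, ENNReal.inv_pow]
    ring
  have h2 : 2 * (∑' i, f i) ^ 2 ≤ 2 * ((∑' i, u i * f i ^ 2) * ∑' i, (u i)⁻¹) := by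
    calc 2 * (∑' i, f i) ^ 2 = ∑' i, ∑' j, 2 * (f i * f j) := by
          simp_rw [ENNReal.tsum_mul_left, ENNReal.tsum_mul_right, sq]
      _ ≤ ∑' i, ∑' j, (u i * f i ^ 2 * (u j)⁻¹ + u j * f j ^ 2 * (u i)⁻¹) :=
          ENNReal.tsum_le_tsum fun i => ENNReal.tsum_le_tsum fun j => key i j
      _ = _ := by
          simp_rw [ENNReal.tsum_add, ENNReal.tsum_mul_left, ENNReal.tsum_mul_right,
            ENNReal.tsum_mul_left]
          ring
  exact (ENNReal.mul_le_mul_iff_right (by norm_num) (by norm_num)).1 h2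

lemma tsum_sub_left (f : ℤ → ℝ≥0∞) (k : ℤ) : ∑' j, f (k - j) = ∑' j, f j :=
  (Equiv.subLeft k).tsum_eq f

lemma tsum_sub_right (f : ℤ → ℝ≥0∞) (j : ℤ) : ∑' k, f (k - j) = ∑' k, f k :=
  (Equiv.subRight j).tsum_eq f

/-- `H¹` is an algebra under convolution of coefficients: Cauchy–Schwarz with the weight
`u j = wt j * wt (k - j)`, for which `wt k * ∑ j, (u j)⁻¹` is bounded uniformly in `k`. -/
lemma wnorm_conv_le (b c : ℤ → ℝ≥0∞) :
    wnorm (fun k => ∑' j, b j * c (k - j)) ≤ 4 * (∑' k, (wt k)⁻¹) * (wnorm b * wnorm c) := by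
  set S := ∑' k, (wt k)⁻¹ with hS
  have hker : ∀ k, wt k * ∑' j, (wt j * wt (k - j))⁻¹ ≤ 4 * S := by
    intro k
    rw [← ENNReal.tsum_mul_left]
    calc ∑' j, wt k * (wt j * wt (k - j))⁻¹
        ≤ ∑' j, (2 * (wt (k - j))⁻¹ + 2 * (wt j)⁻¹) := by
          refine ENNReal.tsum_le_tsum fun j => ?_
          rw [ENNReal.mul_inv (Or.inl (wt_ne_zero j)) (Or.inl (wt_ne_top j))]
          calc wt k * ((wt j)⁻¹ * (wt (k - j))⁻¹)
              ≤ 2 * (wt j + wt (k - j)) * ((wt j)⁻¹ * (wt (k - j))⁻¹) := by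
                gcongr; exact wt_le k j
            _ = 2 * (wt j * (wt j)⁻¹) * (wt (k - j))⁻¹
                + 2 * (wt (k - j) * (wt (k - j))⁻¹) * (wt j)⁻¹ := by ring
            _ = _ := by
              rw [ENNReal.mul_inv_cancel (wt_ne_zero _) (wt_ne_top _),
                ENNReal.mul_inv_cancel (wt_ne_zero _) (wt_ne_top _)]
              ring
      _ = 4 * S := by
          rw [ENNReal.tsum_add, ENNReal.tsum_mul_left, ENNReal.tsum_mul_left,
            tsum_sub_left (fun j => (wt j)⁻¹)]
          ring
  calc wnorm (fun k => ∑' j, b j * c (k - j))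
      ≤ ∑' k, 4 * S * ∑' j, wt j * b j ^ 2 * (wt (k - j) * c (k - j) ^ 2) := by
        refine ENNReal.tsum_le_tsum fun k => ?_
        have := tsum_sq_le (fun j => b j * c (k - j)) (fun j => wt j * wt (k - j))
          (fun j => mul_ne_zero (wt_ne_zero _) (wt_ne_zero _))
          (fun j => ENNReal.mul_ne_top (wt_ne_top _) (wt_ne_top _))
        calc wt k * (∑' j, b j * c (k - j)) ^ 2
            ≤ wt k * ((∑' j, wt j * wt (k - j) * (b j * c (k - j)) ^ 2)
                * ∑' j, (wt j * wt (k - j))⁻¹) := by gcongr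
          _ = (wt k * ∑' j, (wt j * wt (k - j))⁻¹)
                * ∑' j, wt j * wt (k - j) * (b j * c (k - j)) ^ 2 := by ring
          _ ≤ 4 * S * ∑' j, wt j * wt (k - j) * (b j * c (k - j)) ^ 2 := by
              exact mul_le_mul' (hker k) le_rfl
          _ = _ := by
              congr 1
              exact tsum_congr fun j => by ring
    _ = _ := by
        rw [ENNReal.tsum_mul_left, ENNReal.tsum_comm]
        simp_rw [ENNReal.tsum_mul_left]
        congr 1
        rw [wnorm, ← ENNReal.tsum_mul_right]
        exact tsum_congr fun j => by
          rw [tsum_sub_right (fun k => wt k * c k ^ 2)]; rfl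

/-- Splitting an `(m+1)`-tuple with sum `k` into its head `j` and its tail with sum `k - j`. -/
def tupleEquiv (m : ℕ) (k : ℤ) : {t : Fin (m + 1) → ℤ // ∑ i, t i = k} ≃
    Σ j : ℤ, {t : Fin m → ℤ // ∑ i, t i = k - j} where
  toFun t := ⟨t.1 0, fun i => t.1 i.succ, by
    have := t.2
    rw [Fin.sum_univ_succ] at this
    linarith⟩
  invFun p := ⟨Fin.cons p.1 p.2.1, by
    rw [Fin.sum_univ_succ]
    simp [p.2.2]⟩
  left_inv t := by
    ext i
    refine Fin.cases ?_ (fun i => ?_) i <;> simp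
  right_inv p := by
    rcases p with ⟨j, t, ht⟩
    rfl

lemma convPow_succ (m : ℕ) (b : ℤ → ℝ≥0∞) (k : ℤ) :
    convPow (m + 1) b k = ∑' j, b j * convPow m b (k - j) := by
  unfold convPow
  rw [← (tupleEquiv m k).symm.tsum_eq, ENNReal.tsum_sigma']
  refine tsum_congr fun j => ?_
  rw [← ENNReal.tsum_mul_left]
  refine tsum_congr fun t => ?_
  simp [tupleEquiv, Fin.prod_univ_succ]

lemma wnorm_convPow_zero (b : ℤ → ℝ≥0∞) : wnorm (convPow 0 b) ≤ 1 := by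
  rw [wnorm, tsum_eq_single 0]
  · simp [convPow, wt]
  · intro k hk
    have : IsEmpty {t : Fin 0 → ℤ // ∑ i, t i = k} :=
      ⟨fun t => hk (by simpa using t.2.symm)⟩
    simp [convPow]

lemma wnorm_convPow_le (m : ℕ) (b : ℤ → ℝ≥0∞) :
    wnorm (convPow m b) ≤ (4 * (∑' k, (wt k)⁻¹) * wnorm b) ^ m := by
  induction m with
  | zero => simpa using wnorm_convPow_zero b
  | succ m ih =>
    rw [show convPow (m + 1) b = fun k => ∑' j, b j * convPow m b (k - j) from
      funext (convPow_succ m b)]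
    refine (wnorm_conv_le _ _).trans ?_
    rw [pow_succ', ← mul_assoc]
    gcongr

/-- The inequality holds even when the real series defining `mSum` diverges, since `mSum` is then
`0` by convention. -/
lemma ofReal_mSum_le (m : ℕ) (v : FSeq) (k : ℤ) :
    ENNReal.ofReal (mSum m v k) ≤ convPow m (fun k => ENNReal.ofReal ‖v k‖) k := by
  unfold mSum convPow
  have hp : ∀ t : {t : Fin m → ℤ // ∑ i, t i = k},
      ENNReal.ofReal (∏ i, ‖v (t.1 i)‖) = ∏ i, ENNReal.ofReal ‖v (t.1 i)‖ := fun t =>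
    ENNReal.ofReal_prod_of_nonneg fun i _ => norm_nonneg _
  by_cases h : Summable fun t : {t : Fin m → ℤ // ∑ i, t i = k} => ∏ i, ‖v (t.1 i)‖
  · rw [ENNReal.ofReal_tsum_of_nonneg (fun t => by positivity) h]
    simp_rw [hp]
    exact le_rfl
  · simp [tsum_eq_zero_of_not_summable h]

/-- Restricting to `|k| > N` turns `H¹` into `H^s` at the price of the factor `N^{2(s-1)}`. -/
lemma weight_le {N : ℕ} (hN : 0 < N) {s : ℝ} (hs : s ≤ 1) {k : ℤ} (hk : (N : ℤ) < |k|) :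
    (1 + (k : ℝ) ^ 2) ^ s ≤ ((N : ℝ) ^ (-1 + s)) ^ 2 * (1 + (k : ℝ) ^ 2) := by
  have hN' : (0 : ℝ) < N := by exact_mod_cast hN
  have hk' : (N : ℝ) ≤ |(k : ℝ)| := by exact_mod_cast hk.le
  have h1 : (N : ℝ) ^ 2 ≤ 1 + (k : ℝ) ^ 2 := by
    rw [← sq_abs (k : ℝ)]
    nlinarith
  have hpos : (0 : ℝ) < 1 + (k : ℝ) ^ 2 := by positivity
  have e : (1 + (k : ℝ) ^ 2) ^ s = (1 + (k : ℝ) ^ 2) ^ (-1 + s) * (1 + (k : ℝ) ^ 2) := by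
    rw [← Real.rpow_add_one hpos.ne']
    congr 1
    ring
  rw [e]
  gcongr
  calc (1 + (k : ℝ) ^ 2) ^ (-1 + s) ≤ ((N : ℝ) ^ 2) ^ (-1 + s) :=
        Real.rpow_le_rpow_of_nonpos (by positivity) h1 (by linarith)
    _ = _ := by
        rw [← Real.rpow_natCast, ← Real.rpow_natCast, ← Real.rpow_mul hN'.le,
          ← Real.rpow_mul hN'.le, mul_comm]

theorem Tm_highfreq_bound (m : ℕ) (hm : 1 ≤ m) :
    ∃ C : ℝ, 0 < C ∧ ∀ N : ℕ, 0 < N → ∀ s : ℝ, s ∈ Set.Icc (0 : ℝ) 1 →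
      ∀ v g : FSeq, InHs 1 v → InHs 0 g →
      (∀ k : ℤ, ‖g k‖ ≤ if (N : ℤ) < |k| then mSum m v k else 0) →
      hnorm s g ≤ C * (N : ℝ) ^ (-1 + s) * hnorm 1 v ^ m := by
  set S : ℝ := (∑' k, (wt k)⁻¹).toReal with hS
  have hSE : ∑' k, (wt k)⁻¹ = ENNReal.ofReal S := (ENNReal.ofReal_toReal tsum_inv_wt_ne_top).symm
  have hS0 : 0 ≤ S := ENNReal.toReal_nonneg
  -- `+ 1` makes the constant visibly positive.
  refine ⟨Real.sqrt (2 * Real.pi * (4 * S) ^ m) + 1, by positivity, ?_⟩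
  intro N hN s hs v g hv _ hg
  set A : ℝ := ∑' k : ℤ, (1 + (k : ℝ) ^ 2) ^ (1 : ℝ) * ‖v k‖ ^ 2 with hA
  have hA0 : 0 ≤ A := tsum_nonneg fun k => by positivity
  have hAE : wnorm (fun k => ENNReal.ofReal ‖v k‖) = ENNReal.ofReal A := by
    rw [hA, ENNReal.ofReal_tsum_of_nonneg (fun k => by positivity) hv]
    refine tsum_congr fun k => ?_
    rw [Real.rpow_one, ENNReal.ofReal_mul (by positivity), ENNReal.ofReal_pow (norm_nonneg _)]
    rfl
  set M : ℝ := ((N : ℝ) ^ (-1 + s)) ^ 2 with hM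
  have hM0 : 0 ≤ M := by positivity
  have hterm : ∀ k : ℤ, ENNReal.ofReal ((1 + (k : ℝ) ^ 2) ^ s * ‖g k‖ ^ 2) ≤
      ENNReal.ofReal M * (wt k * convPow m (fun k => ENNReal.ofReal ‖v k‖) k ^ 2) := by
    intro k
    have hgk := hg k
    split_ifs at hgk with hk
    · calc ENNReal.ofReal ((1 + (k : ℝ) ^ 2) ^ s * ‖g k‖ ^ 2)
          ≤ ENNReal.ofReal (M * (1 + (k : ℝ) ^ 2) * ‖g k‖ ^ 2) := by
            gcongr
            exact weight_le hN hs.2 hk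
        _ = ENNReal.ofReal M * (wt k * ENNReal.ofReal ‖g k‖ ^ 2) := by
            rw [ENNReal.ofReal_mul (by positivity), ENNReal.ofReal_mul hM0,
              ENNReal.ofReal_pow (norm_nonneg _), mul_assoc]
            rfl
        _ ≤ _ := by
            gcongr
            exact (ENNReal.ofReal_le_ofReal hgk).trans (ofReal_mSum_le m v k)
    · have : ‖g k‖ = 0 := le_antisymm hgk (norm_nonneg _)
      simp [this]
  have hE : ∑' k : ℤ, ENNReal.ofReal ((1 + (k : ℝ) ^ 2) ^ s * ‖g k‖ ^ 2) ≤
      ENNReal.ofReal (M * (4 * S * A) ^ m) := by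
    refine (ENNReal.tsum_le_tsum hterm).trans ?_
    rw [ENNReal.tsum_mul_left, ENNReal.ofReal_mul hM0]
    gcongr
    refine (wnorm_convPow_le m _).trans (le_of_eq ?_)
    rw [hAE, hSE, ENNReal.ofReal_pow (by positivity), ENNReal.ofReal_mul (by positivity),
      ENNReal.ofReal_mul (by norm_num)]
    simp
  have hB : ∑' k : ℤ, (1 + (k : ℝ) ^ 2) ^ s * ‖g k‖ ^ 2 ≤ M * (4 * S * A) ^ m := by
    by_cases hsum : Summable fun k : ℤ => (1 + (k : ℝ) ^ 2) ^ s * ‖g k‖ ^ 2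
    · rw [← ENNReal.ofReal_tsum_of_nonneg (fun k => by positivity) hsum] at hE
      exact (ENNReal.ofReal_le_ofReal_iff (by positivity)).1 hE
    · rw [tsum_eq_zero_of_not_summable hsum]
      positivity
  have hAv : A ≤ hnorm 1 v ^ 2 := by
    rw [hnorm, Real.sq_sqrt (by positivity)]
    nlinarith [Real.pi_gt_three]
  have hv0 : 0 ≤ hnorm 1 v := Real.sqrt_nonneg _
  calc hnorm s g ≤ Real.sqrt (2 * Real.pi * (4 * S) ^ m) * (N : ℝ) ^ (-1 + s) * hnorm 1 v ^ m := by
        rw [hnorm]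
        apply Real.sqrt_le_iff.2 ⟨by positivity, ?_⟩
        rw [mul_pow, mul_pow, Real.sq_sqrt (by positivity), ← hM]
        calc _ ≤ 2 * Real.pi * (M * (4 * S * A) ^ m) := by gcongr
          _ = 2 * Real.pi * (4 * S) ^ m * M * A ^ m := by rw [mul_pow]; ring
          _ ≤ 2 * Real.pi * (4 * S) ^ m * M * (hnorm 1 v ^ 2) ^ m := by gcongr
          _ = _ := by ring
    _ ≤ _ := by
        gcongr
        linarith

end
end
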